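/- arXiv:1801.05722 — 2 statements merged into one kernel-verified Lean document; each statement's English description precedes it below -/
import Mathlib

section
/- Let the notation be as in the context, with two splicing data (superscripts 1 and 2) and the splicing map D. If B0^2 is injective and Binf^2 is surjective, then dim ker(D) ≥ (dim ker B0^1)·(dim ker Binf^2) + (dim ker Binf^1)·(dim ker B0^2) + max{(dim ker(Binf^1 B1^1))·(dim ker(B1^2 B0^2)), (dim ker B1^1)·(dim ker B1^2)}, and dim coker(D) ≥ (dim coker B0^1)·(dim coker Binf^2) + (dim coker Binf^1)·(dim coker B0^2) + max{(dim coker(B1^1 B0^1))·(dim coker(Binf^2 B1^2)), (dim coker B1^1)·(dim coker B1^2)}. -/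
set_option maxHeartbeats 1600000

open Matrix Module
open scoped Kronecker

abbrev F2 : Type := ZMod 2

/-- A splicing datum: the algebraic data extracted from the knot Floer homology of a knot
in a homology sphere, as in Eftekhary's splicing formula. -/
structure SplicingDatum where
  a0 : ℕ
  a1 : ℕ
  ainf : ℕ
  A0 : Matrix (Fin ainf) (Fin ainf) F2
  B0 : Matrix (Fin ainf) (Fin a1) F2
  C0 : Matrix (Fin a1) (Fin ainf) F2
  D0 : Matrix (Fin a1) (Fin a1) F2
  A1 : Matrix (Fin a0) (Fin a0) F2
  B1 : Matrix (Fin a0) (Fin ainf) F2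
  C1 : Matrix (Fin ainf) (Fin a0) F2
  D1 : Matrix (Fin ainf) (Fin ainf) F2
  Ainf : Matrix (Fin a1) (Fin a1) F2
  Binf : Matrix (Fin a1) (Fin a0) F2
  Cinf : Matrix (Fin a0) (Fin a1) F2
  Dinf : Matrix (Fin a0) (Fin a0) F2
  C0inv : Matrix (Fin a1) (Fin ainf) F2
  C1inv : Matrix (Fin ainf) (Fin a0) F2
  Cinfinv : Matrix (Fin a0) (Fin a1) F2
  inv0_left : Matrix.fromBlocks A0 B0 C0 D0 * Matrix.fromBlocks A0 B0 C0inv D0 = 1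
  inv0_right : Matrix.fromBlocks A0 B0 C0inv D0 * Matrix.fromBlocks A0 B0 C0 D0 = 1
  inv1_left : Matrix.fromBlocks A1 B1 C1 D1 * Matrix.fromBlocks A1 B1 C1inv D1 = 1
  inv1_right : Matrix.fromBlocks A1 B1 C1inv D1 * Matrix.fromBlocks A1 B1 C1 D1 = 1
  invinf_left : Matrix.fromBlocks Ainf Binf Cinf Dinf * Matrix.fromBlocks Ainf Binf Cinfinv Dinf = 1
  invinf_right : Matrix.fromBlocks Ainf Binf Cinfinv Dinf * Matrix.fromBlocks Ainf Binf Cinf Dinf = 1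
  comm0 : A0 * B0 + B0 * D0 = 0
  comm1 : A1 * B1 + B1 * D1 = 0
  comminf : Ainf * Binf + Binf * Dinf = 0
  sq0 : B1 * B0 * Binf * (B1 * B0 * Binf) = 0
  sq1 : Binf * B1 * B0 * (Binf * B1 * B0) = 0
  sqinf : B0 * Binf * B1 * (B0 * Binf * B1) = 0

/-- dimension of the kernel of the linear map induced by a matrix -/
noncomputable def kdim {m n : Type*} [Fintype n] (M : Matrix m n F2) : ℕ :=
  finrank F2 ↥(LinearMap.ker M.mulVecLin)

/-- dimension of the cokernel of the linear map induced by a matrix -/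
noncomputable def cdim {m n : Type*} [Fintype n] (M : Matrix m n F2) : ℕ :=
  finrank F2 ((m → F2) ⧸ LinearMap.range M.mulVecLin)

/-- tensor product of two vectors, as a vector indexed by the product type -/
def tensVec {m n : Type*} (x : m → F2) (y : n → F2) : m × n → F2 :=
  fun p => x p.1 * y p.2

namespace SplicingDatum

variable (d : SplicingDatum)

def X0M : Matrix (Fin d.a0) (Fin d.a0) F2 := d.B1 * d.B0 * d.Binf
def X1M : Matrix (Fin d.a1) (Fin d.a1) F2 := d.Binf * d.B1 * d.B0
def XinfM : Matrix (Fin d.ainf) (Fin d.ainf) F2 := d.B0 * d.Binf * d.B1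

def tau0 : Matrix (Fin d.ainf ⊕ Fin d.a1) (Fin d.ainf ⊕ Fin d.a1) F2 :=
  Matrix.fromBlocks d.A0 d.B0 d.C0 d.D0
def tau0inv : Matrix (Fin d.ainf ⊕ Fin d.a1) (Fin d.ainf ⊕ Fin d.a1) F2 :=
  Matrix.fromBlocks d.A0 d.B0 d.C0inv d.D0
def tau1 : Matrix (Fin d.a0 ⊕ Fin d.ainf) (Fin d.a0 ⊕ Fin d.ainf) F2 :=
  Matrix.fromBlocks d.A1 d.B1 d.C1 d.D1
def tau1inv : Matrix (Fin d.a0 ⊕ Fin d.ainf) (Fin d.a0 ⊕ Fin d.ainf) F2 :=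
  Matrix.fromBlocks d.A1 d.B1 d.C1inv d.D1
def tauinf : Matrix (Fin d.a1 ⊕ Fin d.a0) (Fin d.a1 ⊕ Fin d.a0) F2 :=
  Matrix.fromBlocks d.Ainf d.Binf d.Cinf d.Dinf
def tauinfinv : Matrix (Fin d.a1 ⊕ Fin d.a0) (Fin d.a1 ⊕ Fin d.a0) F2 :=
  Matrix.fromBlocks d.Ainf d.Binf d.Cinfinv d.Dinf

/-- the map `finf : F^{ainf+a1} → F^{a0+ainf}` -/
def finfM : Matrix (Fin d.a0 ⊕ Fin d.ainf) (Fin d.ainf ⊕ Fin d.a1) F2 :=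
  Matrix.fromBlocks 0 0 (1 : Matrix (Fin d.ainf) (Fin d.ainf) F2) 0
/-- the map `f0 : F^{a0+ainf} → F^{a1+a0}` -/
def f0M : Matrix (Fin d.a1 ⊕ Fin d.a0) (Fin d.a0 ⊕ Fin d.ainf) F2 :=
  Matrix.fromBlocks 0 0 (1 : Matrix (Fin d.a0) (Fin d.a0) F2) 0
/-- the map `f1 : F^{a1+a0} → F^{ainf+a1}` -/
def f1M : Matrix (Fin d.ainf ⊕ Fin d.a1) (Fin d.a1 ⊕ Fin d.a0) F2 :=
  Matrix.fromBlocks 0 0 (1 : Matrix (Fin d.a1) (Fin d.a1) F2) 0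

def fbarinfM : Matrix (Fin d.a0 ⊕ Fin d.ainf) (Fin d.ainf ⊕ Fin d.a1) F2 :=
  d.tau1inv * d.finfM * d.tau0
def fbar0M : Matrix (Fin d.a1 ⊕ Fin d.a0) (Fin d.a0 ⊕ Fin d.ainf) F2 :=
  d.tauinfinv * d.f0M * d.tau1
def fbar1M : Matrix (Fin d.ainf ⊕ Fin d.a1) (Fin d.a1 ⊕ Fin d.a0) F2 :=
  d.tau0inv * d.f1M * d.tauinf

noncomputable def r0 : ℕ := d.B0.rank
noncomputable def r1 : ℕ := d.B1.rank
noncomputable def rinf : ℕ := d.Binf.rank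

noncomputable def k0 : ℕ :=
  finrank F2 ↥(LinearMap.ker d.f0M.mulVecLin ⊓ LinearMap.ker d.fbar0M.mulVecLin)
noncomputable def k1 : ℕ :=
  finrank F2 ↥(LinearMap.ker d.f1M.mulVecLin ⊓ LinearMap.ker d.fbar1M.mulVecLin)
noncomputable def kinf : ℕ :=
  finrank F2 ↥(LinearMap.ker d.finfM.mulVecLin ⊓ LinearMap.ker d.fbarinfM.mulVecLin)

noncomputable def l0 : ℕ :=
  finrank F2 ↥(LinearMap.ker (d.f0M + d.fbar0M).mulVecLin) - d.k0
noncomputable def l1 : ℕ :=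
  finrank F2 ↥(LinearMap.ker (d.f1M + d.fbar1M).mulVecLin) - d.k1
noncomputable def linf : ℕ :=
  finrank F2 ↥(LinearMap.ker (d.finfM + d.fbarinfM).mulVecLin) - d.kinf

noncomputable def c0 : ℕ :=
  finrank F2 ((Fin d.a1 ⊕ Fin d.a0 → F2) ⧸
    (LinearMap.range d.f0M.mulVecLin ⊔ LinearMap.range d.fbar0M.mulVecLin))
noncomputable def c1 : ℕ :=
  finrank F2 ((Fin d.ainf ⊕ Fin d.a1 → F2) ⧸
    (LinearMap.range d.f1M.mulVecLin ⊔ LinearMap.range d.fbar1M.mulVecLin))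
noncomputable def cinf : ℕ :=
  finrank F2 ((Fin d.a0 ⊕ Fin d.ainf → F2) ⧸
    (LinearMap.range d.finfM.mulVecLin ⊔ LinearMap.range d.fbarinfM.mulVecLin))

noncomputable def dd0 : ℕ :=
  finrank F2 ↥(LinearMap.range d.f0M.mulVecLin ⊔ LinearMap.range d.fbar0M.mulVecLin) -
    finrank F2 ↥(LinearMap.range (d.f0M + d.fbar0M).mulVecLin)
noncomputable def dd1 : ℕ :=
  finrank F2 ↥(LinearMap.range d.f1M.mulVecLin ⊔ LinearMap.range d.fbar1M.mulVecLin) -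
    finrank F2 ↥(LinearMap.range (d.f1M + d.fbar1M).mulVecLin)
noncomputable def ddinf : ℕ :=
  finrank F2 ↥(LinearMap.range d.finfM.mulVecLin ⊔ LinearMap.range d.fbarinfM.mulVecLin) -
    finrank F2 ↥(LinearMap.range (d.finfM + d.fbarinfM).mulVecLin)

noncomputable def delta0 : ℕ := d.a0 - d.rinf - d.l0
noncomputable def delta1 : ℕ := d.a1 - d.r0 - d.l1
noncomputable def deltainf : ℕ := d.ainf - d.r1 - d.linf

end SplicingDatum

namespace SplicingDatum

/-- Index type of the source of the splicing map `D`. -/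
abbrev Src (e1 e2 : SplicingDatum) : Type :=
  (Fin e1.ainf × Fin e2.ainf) ⊕ (Fin e1.ainf × Fin e2.a0) ⊕ (Fin e1.a1 × Fin e2.a0) ⊕
    (Fin e1.a0 × Fin e2.ainf) ⊕ (Fin e1.a0 × Fin e2.a1) ⊕ (Fin e1.a1 × Fin e2.a1)

/-- Index type of the target of the splicing map `D`. -/
abbrev Tgt (e1 e2 : SplicingDatum) : Type :=
  (Fin e1.a0 × Fin e2.a0) ⊕ (Fin e1.ainf × Fin e2.a1) ⊕ (Fin e1.ainf × Fin e2.a0) ⊕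
    (Fin e1.a1 × Fin e2.ainf) ⊕ (Fin e1.a0 × Fin e2.ainf) ⊕ (Fin e1.a1 × Fin e2.a1)

def row1 (e1 e2 : SplicingDatum) : Matrix (Fin e1.a0 × Fin e2.a0) (Src e1 e2) F2 :=
  Matrix.fromCols ((e1.Dinf * e1.B1) ⊗ₖ (e2.B1 * e2.A0)) <|
  Matrix.fromCols ((e1.B1 * e1.A0) ⊗ₖ (1 : Matrix (Fin e2.a0) (Fin e2.a0) F2)) <|
  Matrix.fromCols ((e1.B1 * e1.B0) ⊗ₖ (1 : Matrix (Fin e2.a0) (Fin e2.a0) F2)) <|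
  Matrix.fromCols ((e1.Dinf * e1.A1) ⊗ₖ (e2.B1 * e2.A0)) <|
  Matrix.fromCols ((1 : Matrix (Fin e1.a0) (Fin e1.a0) F2) ⊗ₖ (e2.B1 * e2.B0)) 0

def row2 (e1 e2 : SplicingDatum) : Matrix (Fin e1.ainf × Fin e2.a1) (Src e1 e2) F2 :=
  Matrix.fromCols ((1 : Matrix (Fin e1.ainf) (Fin e1.ainf) F2) ⊗ₖ (e2.Binf * e2.B1)) <|
  Matrix.fromCols ((e1.D1 * e1.A0) ⊗ₖ (e2.Binf * e2.A1)) <|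
  Matrix.fromCols ((e1.D1 * e1.B0) ⊗ₖ (e2.Binf * e2.A1)) <|
  Matrix.fromCols 0 <|
  Matrix.fromCols ((e1.B0 * e1.Binf) ⊗ₖ (1 : Matrix (Fin e2.a1) (Fin e2.a1) F2))
    ((e1.B0 * e1.Ainf) ⊗ₖ (1 : Matrix (Fin e2.a1) (Fin e2.a1) F2))

def row3 (e1 e2 : SplicingDatum) : Matrix (Fin e1.ainf × Fin e2.a0) (Src e1 e2) F2 :=
  Matrix.fromCols ((1 : Matrix (Fin e1.ainf) (Fin e1.ainf) F2) ⊗ₖ (e2.Dinf * e2.B1)) <|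
  Matrix.fromCols
    ((1 : Matrix (Fin e1.ainf) (Fin e1.ainf) F2) ⊗ₖ (1 : Matrix (Fin e2.a0) (Fin e2.a0) F2) +
      (e1.D1 * e1.A0) ⊗ₖ (e2.Dinf * e2.A1)) <|
  Matrix.fromCols ((e1.D1 * e1.B0) ⊗ₖ (e2.Dinf * e2.A1)) <|
  Matrix.fromCols 0 <|
  Matrix.fromCols 0 0

def row4 (e1 e2 : SplicingDatum) : Matrix (Fin e1.a1 × Fin e2.ainf) (Src e1 e2) F2 :=
  Matrix.fromCols ((e1.Binf * e1.B1) ⊗ₖ (1 : Matrix (Fin e2.ainf) (Fin e2.ainf) F2)) <|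
  Matrix.fromCols 0 <|
  Matrix.fromCols ((1 : Matrix (Fin e1.a1) (Fin e1.a1) F2) ⊗ₖ (e2.B0 * e2.Binf)) <|
  Matrix.fromCols ((e1.Binf * e1.A1) ⊗ₖ (1 : Matrix (Fin e2.ainf) (Fin e2.ainf) F2)) <|
  Matrix.fromCols
    ((e1.D0 * e1.Binf) ⊗ₖ (e2.B0 * e2.Ainf) + (e1.X1M * e1.Binf) ⊗ₖ (e2.B0 * e2.X1M))
    ((e1.D0 * e1.Ainf) ⊗ₖ (e2.B0 * e2.Ainf) + (e1.X1M * e1.Ainf) ⊗ₖ (e2.B0 * e2.X1M))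

def row5 (e1 e2 : SplicingDatum) : Matrix (Fin e1.a0 × Fin e2.ainf) (Src e1 e2) F2 :=
  Matrix.fromCols ((e1.Dinf * e1.B1) ⊗ₖ (e2.D1 * e2.A0)) <|
  Matrix.fromCols 0 <|
  Matrix.fromCols 0 <|
  Matrix.fromCols
    ((1 : Matrix (Fin e1.a0) (Fin e1.a0) F2) ⊗ₖ (1 : Matrix (Fin e2.ainf) (Fin e2.ainf) F2) +
      (e1.Dinf * e1.A1) ⊗ₖ (e2.D1 * e2.A0)) <|
  Matrix.fromCols ((1 : Matrix (Fin e1.a0) (Fin e1.a0) F2) ⊗ₖ (e2.D1 * e2.B0)) 0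

def row6 (e1 e2 : SplicingDatum) : Matrix (Fin e1.a1 × Fin e2.a1) (Src e1 e2) F2 :=
  Matrix.fromCols 0 <|
  Matrix.fromCols 0 <|
  Matrix.fromCols ((1 : Matrix (Fin e1.a1) (Fin e1.a1) F2) ⊗ₖ (e2.D0 * e2.Binf)) <|
  Matrix.fromCols 0 <|
  Matrix.fromCols
    ((e1.D0 * e1.Binf) ⊗ₖ (e2.D0 * e2.Ainf) + (e1.X1M * e1.Binf) ⊗ₖ (e2.D0 * e2.X1M))
    ((1 : Matrix (Fin e1.a1) (Fin e1.a1) F2) ⊗ₖ (1 : Matrix (Fin e2.a1) (Fin e2.a1) F2) +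
      (e1.D0 * e1.Ainf) ⊗ₖ (e2.D0 * e2.Ainf) + (e1.X1M * e1.Ainf) ⊗ₖ (e2.D0 * e2.X1M))

/-- The splicing map `D = D(K1, K2)` as a `6 × 6` block matrix. -/
def spliceD (e1 e2 : SplicingDatum) : Matrix (Tgt e1 e2) (Src e1 e2) F2 :=
  Matrix.fromRows (row1 e1 e2) <| Matrix.fromRows (row2 e1 e2) <|
  Matrix.fromRows (row3 e1 e2) <| Matrix.fromRows (row4 e1 e2) <|
  Matrix.fromRows (row5 e1 e2) (row6 e1 e2)

end SplicingDatum

theorem exists_ker_matrix {m n : Type*} [Fintype n] [DecidableEq n]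
    (M : Matrix m n F2) :
    ∃ (K : Matrix n (Fin (kdim M)) F2) (L : Matrix (Fin (kdim M)) n F2), M * K = 0 ∧ L * K = 1 := by
  let e : (Fin (kdim M) → F2) ≃ₗ[F2] LinearMap.ker M.mulVecLin :=
    (Module.finBasis F2 (LinearMap.ker M.mulVecLin)).equivFun.symm
  let f : (Fin (kdim M) → F2) →ₗ[F2] (n → F2) := (LinearMap.ker M.mulVecLin).subtype ∘ₗ e.toLinearMap
  have hf : LinearMap.ker f = ⊥ := by
    rw [LinearMap.ker_eq_bot]
    exact (Submodule.injective_subtype _).comp e.injective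
  obtain ⟨g, hg⟩ := LinearMap.exists_leftInverse_of_injective f hf
  refine ⟨LinearMap.toMatrix' f, LinearMap.toMatrix' g, ?_, ?_⟩
  · apply Matrix.ext_of_mulVec_single
    intro i
    rw [← Matrix.mulVec_mulVec, LinearMap.toMatrix'_mulVec, Matrix.zero_mulVec]
    exact (e (Pi.single i 1)).2
  · rw [← LinearMap.toMatrix'_comp, hg, LinearMap.toMatrix'_id]

theorem card_le_kdim {m n ι : Type*} [Fintype n] [DecidableEq n] [Fintype ι] [DecidableEq ι]
    (M : Matrix m n F2) (K : Matrix n ι F2) (L : Matrix ι n F2) (h : M * K = 0) (hL : L * K = 1) :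
    Fintype.card ι ≤ kdim M := by
  let f : (ι → F2) →ₗ[F2] LinearMap.ker M.mulVecLin :=
    LinearMap.codRestrict _ K.mulVecLin (by
      intro c
      simp [LinearMap.mem_ker, Matrix.mulVec_mulVec, h])
  have hf : Function.Injective f := by
    intro x y hxy
    have h1 : K *ᵥ x = K *ᵥ y := congrArg Subtype.val hxy
    have h2 := congrArg (fun z => L *ᵥ z) h1
    simpa [Matrix.mulVec_mulVec, hL] using h2
  have := LinearMap.finrank_le_finrank_of_injective hf
  simpa [kdim] using this

theorem cdim_eq {m n : Type*} [Fintype m] [Fintype n] [DecidableEq m] [DecidableEq n]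
    (M : Matrix m n F2) : cdim M = kdim Mᵀ := by
  have h1 := Submodule.finrank_quotient_add_finrank (LinearMap.range M.mulVecLin)
  have h2 := LinearMap.finrank_range_add_finrank_ker Mᵀ.mulVecLin
  have h3 : finrank F2 (LinearMap.range Mᵀ.mulVecLin) = finrank F2 (LinearMap.range M.mulVecLin) :=
    Matrix.rank_transpose M
  simp only [Module.finrank_fintype_fun_eq_card] at h1 h2
  unfold cdim kdim
  omega

theorem exists_coker_matrix {m n : Type*} [Fintype m] [Fintype n] [DecidableEq m] [DecidableEq n]
    (M : Matrix m n F2) :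
    ∃ (K : Matrix (Fin (cdim M)) m F2) (L : Matrix m (Fin (cdim M)) F2), K * M = 0 ∧ K * L = 1 := by
  rw [cdim_eq]
  obtain ⟨K, L, h, h'⟩ := exists_ker_matrix Mᵀ
  refine ⟨Kᵀ, Lᵀ, ?_, ?_⟩
  · simpa [Matrix.transpose_mul] using congrArg Matrix.transpose h
  · rw [← Matrix.transpose_mul, h', Matrix.transpose_one]

theorem card_le_cdim {m n ι : Type*} [Fintype m] [DecidableEq m] [Fintype n] [DecidableEq n]
    [Fintype ι] [DecidableEq ι]
    (M : Matrix m n F2) (K : Matrix ι m F2) (L : Matrix m ι F2) (h : K * M = 0) (hL : K * L = 1) :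
    Fintype.card ι ≤ cdim M := by
  rw [cdim_eq]
  refine card_le_kdim Mᵀ Kᵀ Lᵀ ?_ ?_
  · rw [← Matrix.transpose_mul, h, Matrix.transpose_zero]
  · rw [← Matrix.transpose_mul, hL, Matrix.transpose_one]

theorem add_self_F2 {m n : Type*} (M : Matrix m n F2) : M + M = 0 := by
  ext i j
  exact CharTwo.add_self_eq_zero _

theorem fromCols_add_F2 {m n k : Type*} (A C : Matrix m n F2) (B D : Matrix m k F2) :
    Matrix.fromCols A B + Matrix.fromCols C D = Matrix.fromCols (A + C) (B + D) := by
  ext i (j | j) <;> rfl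

theorem eq_of_add_F2 {m n : Type*} {M N : Matrix m n F2} (h : M + N = 0) : M = N := by
  ext i j
  exact CharTwo.add_eq_zero.mp (congrFun (congrFun h i) j)

namespace SplicingDatum

theorem ker_left (e1 e2 : SplicingDatum) {a b c d : ℕ}
    (K1 : Matrix (Fin e1.a1) (Fin a) F2) (L1 : Matrix (Fin a) (Fin e1.a1) F2)
    (K2 : Matrix (Fin e2.a0) (Fin b) F2) (L2 : Matrix (Fin b) (Fin e2.a0) F2)
    (K3 : Matrix (Fin e1.ainf) (Fin c) F2) (L3 : Matrix (Fin c) (Fin e1.ainf) F2)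
    (K4 : Matrix (Fin e2.ainf) (Fin d) F2) (L4 : Matrix (Fin d) (Fin e2.ainf) F2)
    (T : Matrix (Fin e1.a0 × Fin e2.a1) (Fin c × Fin d) F2)
    (h1 : e1.B0 * K1 = 0) (h2 : e2.Binf * K2 = 0)
    (l1 : L1 * K1 = 1) (l2 : L2 * K2 = 1) (l3 : L3 * K3 = 1) (l4 : L4 * K4 = 1)
    (hD : spliceD e1 e2 * (Matrix.fromRows (K3 ⊗ₖ K4) (Matrix.fromRows 0 (Matrix.fromRows 0
      (Matrix.fromRows 0 (Matrix.fromRows T 0)))) : Matrix (Src e1 e2) (Fin c × Fin d) F2) = 0) :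
    a * b + c * d ≤ kdim (spliceD e1 e2) := by
  let E1 : Matrix (Src e1 e2) (Fin a × Fin b) F2 :=
    Matrix.fromRows 0 (Matrix.fromRows 0 (Matrix.fromRows (K1 ⊗ₖ K2)
      (Matrix.fromRows 0 (Matrix.fromRows 0 0))))
  let E2 : Matrix (Src e1 e2) (Fin c × Fin d) F2 :=
    Matrix.fromRows (K3 ⊗ₖ K4) (Matrix.fromRows 0 (Matrix.fromRows 0
      (Matrix.fromRows 0 (Matrix.fromRows T 0))))
  let R1 : Matrix (Fin a × Fin b) (Src e1 e2) F2 :=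
    Matrix.fromCols 0 (Matrix.fromCols 0 (Matrix.fromCols (L1 ⊗ₖ L2)
      (Matrix.fromCols 0 (Matrix.fromCols 0 0))))
  let R2 : Matrix (Fin c × Fin d) (Src e1 e2) F2 :=
    Matrix.fromCols (L3 ⊗ₖ L4) 0
  have := card_le_kdim (spliceD e1 e2) (Matrix.fromCols E1 E2) (Matrix.fromRows R1 R2) ?_ ?_
  · simpa using this
  · have hE1 : spliceD e1 e2 * E1 = 0 := by
      simp [E1, spliceD, row1, row2, row3, row4, row5, row6, Matrix.fromRows_mul,
          -Matrix.fromRows_fromCols_eq_fromBlocks,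
        Matrix.fromCols_mul_fromRows, ← Matrix.mul_kronecker_mul, Matrix.mul_assoc, h1, h2]
    rw [Matrix.mul_fromCols, hE1, hD]
    simp
  · rw [Matrix.fromRows_mul_fromCols]
    simp [E1, E2, R1, R2, Matrix.fromCols_mul_fromRows, ← Matrix.mul_kronecker_mul, l1, l2, l3, l4]

theorem coker_left (e1 e2 : SplicingDatum) {a b c d : ℕ}
    (K1 : Matrix (Fin a) (Fin e1.a1) F2) (L1 : Matrix (Fin e1.a1) (Fin a) F2)
    (K2 : Matrix (Fin b) (Fin e2.ainf) F2) (L2 : Matrix (Fin e2.ainf) (Fin b) F2)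
    (K3 : Matrix (Fin c) (Fin e1.a0) F2) (L3 : Matrix (Fin e1.a0) (Fin c) F2)
    (K4 : Matrix (Fin d) (Fin e2.a0) F2) (L4 : Matrix (Fin e2.a0) (Fin d) F2)
    (T : Matrix (Fin c × Fin d) (Fin e1.ainf × Fin e2.a1) F2)
    (S : Matrix (Fin c × Fin d) (Fin e1.ainf × Fin e2.a0) F2)
    (h1 : K1 * e1.Binf = 0) (h2 : K2 * e2.B0 = 0)
    (l1 : K1 * L1 = 1) (l2 : K2 * L2 = 1) (l3 : K3 * L3 = 1) (l4 : K4 * L4 = 1)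
    (hD : (Matrix.fromCols (K3 ⊗ₖ K4) (Matrix.fromCols T (Matrix.fromCols S
      (Matrix.fromCols 0 (Matrix.fromCols 0 0)))) : Matrix (Fin c × Fin d) (Tgt e1 e2) F2) * spliceD e1 e2 = 0) :
    a * b + c * d ≤ cdim (spliceD e1 e2) := by
  let E1 : Matrix (Fin a × Fin b) (Tgt e1 e2) F2 :=
    Matrix.fromCols 0 (Matrix.fromCols 0 (Matrix.fromCols 0 (Matrix.fromCols (K1 ⊗ₖ K2)
      (Matrix.fromCols 0 0))))
  let E2 : Matrix (Fin c × Fin d) (Tgt e1 e2) F2 :=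
    Matrix.fromCols (K3 ⊗ₖ K4) (Matrix.fromCols T (Matrix.fromCols S
      (Matrix.fromCols 0 (Matrix.fromCols 0 0))))
  let R1 : Matrix (Tgt e1 e2) (Fin a × Fin b) F2 :=
    Matrix.fromRows 0 (Matrix.fromRows 0 (Matrix.fromRows 0 (Matrix.fromRows (L1 ⊗ₖ L2)
      (Matrix.fromRows 0 0))))
  let R2 : Matrix (Tgt e1 e2) (Fin c × Fin d) F2 :=
    Matrix.fromRows (L3 ⊗ₖ L4) 0
  have := card_le_cdim (spliceD e1 e2) (Matrix.fromRows E1 E2) (Matrix.fromCols R1 R2) ?_ ?_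
  · simpa using this
  · have hE1 : E1 * spliceD e1 e2 = 0 := by
      simp [E1, spliceD, row4, Matrix.mul_fromCols, Matrix.mul_add,
        Matrix.fromCols_mul_fromRows, ← Matrix.mul_kronecker_mul, ← Matrix.mul_assoc, h1, h2]
    rw [Matrix.fromRows_mul, hE1, hD]
    simp
  · rw [Matrix.fromRows_mul_fromCols]
    simp [E1, E2, R1, R2, Matrix.fromCols_mul_fromRows, ← Matrix.mul_kronecker_mul, l1, l2, l3, l4]

end SplicingDatum

open SplicingDatum in
/-- lower bounds on `dim ker D` and `dim coker D` when `B0²` is injective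
and `Binf²` is surjective. -/
theorem stmt10 (e1 e2 : SplicingDatum)
    (hinj : Function.Injective e2.B0.mulVecLin)
    (hsurj : Function.Surjective e2.Binf.mulVecLin) :
    kdim (spliceD e1 e2) ≥
      kdim e1.B0 * kdim e2.Binf + kdim e1.Binf * kdim e2.B0 +
        max (kdim (e1.Binf * e1.B1) * kdim (e2.B1 * e2.B0)) (kdim e1.B1 * kdim e2.B1) ∧
    cdim (spliceD e1 e2) ≥
      cdim e1.B0 * cdim e2.Binf + cdim e1.Binf * cdim e2.B0 +
        max (cdim (e1.B1 * e1.B0) * cdim (e2.Binf * e2.B1)) (cdim e1.B1 * cdim e2.B1) := by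
  obtain ⟨LB, hLB⟩ := LinearMap.exists_leftInverse_of_injective _ (LinearMap.ker_eq_bot.mpr hinj)
  obtain ⟨RB, hRB⟩ := LinearMap.exists_rightInverse_of_surjective _
    (LinearMap.range_eq_top.mpr hsurj)
  have hLB' : LinearMap.toMatrix' LB * e2.B0 = 1 := by
    have := congrArg LinearMap.toMatrix' hLB
    rwa [LinearMap.toMatrix'_comp, LinearMap.toMatrix'_id, ← Matrix.toLin'_apply',
      LinearMap.toMatrix'_toLin'] at this
  have hRB' : e2.Binf * LinearMap.toMatrix' RB = 1 := by
    have := congrArg LinearMap.toMatrix' hRB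
    rwa [LinearMap.toMatrix'_comp, LinearMap.toMatrix'_id, ← Matrix.toLin'_apply',
      LinearMap.toMatrix'_toLin'] at this
  generalize LinearMap.toMatrix' LB = LB at hLB'
  generalize LinearMap.toMatrix' RB = RB at hRB'
  have hk : kdim e2.B0 = 0 := by
    unfold kdim
    rw [LinearMap.ker_eq_bot.mpr hinj, finrank_bot]
  have hc : cdim e2.Binf = 0 := by
    unfold cdim
    have := Submodule.finrank_quotient_add_finrank (LinearMap.range e2.Binf.mulVecLin)
    rw [LinearMap.range_eq_top.mpr hsurj, finrank_top] at this
    rw [LinearMap.range_eq_top.mpr hsurj]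
    omega
  have c1inf : e1.Ainf * e1.Binf = e1.Binf * e1.Dinf := eq_of_add_F2 e1.comminf
  have c2inf : e2.Ainf * e2.Binf = e2.Binf * e2.Dinf := eq_of_add_F2 e2.comminf
  have c10 : e1.A0 * e1.B0 = e1.B0 * e1.D0 := eq_of_add_F2 e1.comm0
  have c20 : e2.A0 * e2.B0 = e2.B0 * e2.D0 := eq_of_add_F2 e2.comm0
  constructor
  · rw [hk, Nat.mul_zero, Nat.add_zero, ge_iff_le]
    obtain ⟨K1, L1, h1, l1⟩ := exists_ker_matrix e1.B0
    obtain ⟨K2, L2, h2, l2⟩ := exists_ker_matrix e2.Binf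
    rcases max_choice (kdim (e1.Binf * e1.B1) * kdim (e2.B1 * e2.B0))
      (kdim e1.B1 * kdim e2.B1) with hm | hm <;> rw [hm]
    · obtain ⟨K3, L3, h3, l3⟩ := exists_ker_matrix (e1.Binf * e1.B1)
      obtain ⟨K4, L4, h4, l4⟩ := exists_ker_matrix (e2.B1 * e2.B0)
      rw [Matrix.mul_assoc] at h3 h4
      refine ker_left e1 e2 K1 L1 K2 L2 K3 L3 (e2.B0 * K4) (L4 * LB)
        ((e1.Dinf * e1.B1 * K3) ⊗ₖ (e2.D0 * K4)) h1 h2 l1 l2 l3 ?_ ?_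
      · rw [Matrix.mul_assoc, ← Matrix.mul_assoc LB, hLB', Matrix.one_mul, l4]
      · have g1 : e2.A0 * (e2.B0 * K4) = e2.B0 * (e2.D0 * K4) := by
          rw [← Matrix.mul_assoc, c20, Matrix.mul_assoc]
        have g2 : e1.Binf * (e1.Dinf * (e1.B1 * K3)) = 0 := by
          rw [← Matrix.mul_assoc, ← c1inf, Matrix.mul_assoc, h3, Matrix.mul_zero]
        simp [spliceD, row1, row2, row3, row4, row5, row6, Matrix.fromRows_mul,
          -Matrix.fromRows_fromCols_eq_fromBlocks, Matrix.add_mul,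
          Matrix.fromCols_mul_fromRows, ← Matrix.mul_kronecker_mul, Matrix.mul_assoc, h3, h4,
          g1, g2, add_self_F2]
    · obtain ⟨K3, L3, h3, l3⟩ := exists_ker_matrix e1.B1
      obtain ⟨K4, L4, h4, l4⟩ := exists_ker_matrix e2.B1
      refine ker_left e1 e2 K1 L1 K2 L2 K3 L3 K4 L4 0 h1 h2 l1 l2 l3 l4 ?_
      simp [spliceD, row1, row2, row3, row4, row5, row6, Matrix.fromRows_mul,
          -Matrix.fromRows_fromCols_eq_fromBlocks, Matrix.add_mul,
          Matrix.fromCols_mul_fromRows, ← Matrix.mul_kronecker_mul, Matrix.mul_assoc, h3, h4]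
  · rw [hc, Nat.mul_zero, Nat.zero_add, ge_iff_le]
    obtain ⟨K1, L1, h1, l1⟩ := exists_coker_matrix e1.Binf
    obtain ⟨K2, L2, h2, l2⟩ := exists_coker_matrix e2.B0
    rcases max_choice (cdim (e1.B1 * e1.B0) * cdim (e2.Binf * e2.B1))
      (cdim e1.B1 * cdim e2.B1) with hm | hm <;> rw [hm]
    · obtain ⟨K3, L3, h3, l3⟩ := exists_coker_matrix (e1.B1 * e1.B0)
      obtain ⟨K4, L4, h4, l4⟩ := exists_coker_matrix (e2.Binf * e2.B1)
      rw [← Matrix.mul_assoc] at h3 h4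
      refine coker_left e1 e2 K1 L1 K2 L2 K3 L3 (K4 * e2.Binf) (RB * L4)
        ((K3 * e1.B1 * e1.A0) ⊗ₖ (K4 * e2.Ainf)) ((K3 * e1.B1 * e1.A0) ⊗ₖ (K4 * e2.Binf))
        h1 h2 l1 l2 l3 ?_ ?_
      · rw [Matrix.mul_assoc, ← Matrix.mul_assoc e2.Binf, hRB', Matrix.one_mul, l4]
      · have g1 : K4 * e2.Ainf * e2.Binf = K4 * e2.Binf * e2.Dinf := by
          rw [Matrix.mul_assoc, c2inf, Matrix.mul_assoc]
        have g2 : K3 * e1.B1 * e1.A0 * e1.B0 = 0 := by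
          rw [Matrix.mul_assoc, c10, ← Matrix.mul_assoc, h3, Matrix.zero_mul]
        have g3 {m n : Type} (M N : Matrix m n F2) : M + (N + (M + N)) = 0 := by
          rw [add_left_comm N, ← add_assoc, add_self_F2, add_self_F2, add_zero]
        simp [spliceD, row1, row2, row3, Matrix.mul_fromCols, Matrix.mul_add,
          Matrix.fromCols_mul_fromRows, ← Matrix.mul_kronecker_mul, ← Matrix.mul_assoc, h3, h4,
          g1, g2, g3, fromCols_add_F2, add_self_F2]
    · obtain ⟨K3, L3, h3, l3⟩ := exists_coker_matrix e1.B1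
      obtain ⟨K4, L4, h4, l4⟩ := exists_coker_matrix e2.B1
      refine coker_left e1 e2 K1 L1 K2 L2 K3 L3 K4 L4 0 0 h1 h2 l1 l2 l3 l4 ?_
      simp [spliceD, row1, Matrix.mul_fromCols, Matrix.mul_add,
          Matrix.fromCols_mul_fromRows, ← Matrix.mul_kronecker_mul, ← Matrix.mul_assoc, h3, h4]
end

section
/- Let the notation be as in the context, with two splicing data (superscripts 1 and 2) and the splicing map D. Suppose that in the second datum B0^2 is invertible (in particular ainf^2 = a1^2), B1^2 is injective, Binf^2 is surjective, and a0^2 = a1^2 + 1. Then dim ker(D) ≥ dim ker(B1^1 B0^1) · dim ker(X1^2) and dim coker(D) ≥ dim coker(B1^1 B0^1) · dim coker(Xinf^2). -/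
set_option maxHeartbeats 1600000

open Matrix Module
open scoped Kronecker

lemma kron_mulVec {m n p q : Type*} [Fintype n] [Fintype q] (A : Matrix m n F2)
    (B : Matrix p q F2) (x : n → F2) (y : q → F2) :
    (A ⊗ₖ B) *ᵥ tensVec x y = tensVec (A *ᵥ x) (B *ᵥ y) := by
  funext ⟨i, j⟩
  simp only [Matrix.mulVec, dotProduct, tensVec, Matrix.kroneckerMap_apply,
    Fintype.sum_prod_type, Finset.sum_mul_sum]
  refine Finset.sum_congr rfl fun a _ => Finset.sum_congr rfl fun b _ => by ring

lemma tensVec_zero_left {m n : Type*} (y : n → F2) : tensVec (0 : m → F2) y = 0 := by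
  funext p; simp [tensVec]

lemma tensVec_zero_right {m n : Type*} (x : m → F2) : tensVec x (0 : n → F2) = 0 := by
  funext p; simp [tensVec]

lemma vec_add_self {m : Type*} (x : m → F2) : x + x = 0 := by
  funext p; exact CharTwo.add_self_eq_zero _

lemma mat_eq_of_add {m n : Type*} {A B : Matrix m n F2} (h : A + B = 0) : A = B := by
  ext i j
  have := congrFun (congrFun h i) j
  exact CharTwo.add_eq_zero.mp this

/-- rank-nullity comparison of kernel and cokernel -/
lemma kdim_cdim {m n : Type*} [Fintype m] [Fintype n] (M : Matrix m n F2) :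
    kdim M + Fintype.card m = cdim M + Fintype.card n := by
  have h1 := M.mulVecLin.finrank_range_add_finrank_ker
  have h2 := (LinearMap.range M.mulVecLin).finrank_quotient_add_finrank
  simp only [Module.finrank_fintype_fun_eq_card] at h1 h2
  unfold kdim cdim
  omega

namespace SplicingDatum

/-- kernel vectors of the splicing map -/
def kerVec (e1 e2 : SplicingDatum) (w : Fin e2.a1 → F2) :
    (Fin e1.a1 → F2) →ₗ[F2] (Src e1 e2 → F2) where
  toFun v := Sum.elim (tensVec ((e1.D1 * e1.B0) *ᵥ v) ((e2.D1 * e2.B0) *ᵥ w))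
    (Sum.elim 0 (Sum.elim (tensVec v ((e2.B1 * e2.B0) *ᵥ w)) (Sum.elim 0 (Sum.elim 0 0))))
  map_add' x y := by
    funext i
    rcases i with i | i | i | i | i | i <;>
      simp [tensVec, Matrix.mulVec_add, add_mul]
  map_smul' c x := by
    funext i
    rcases i with i | i | i | i | i | i <;>
      simp [tensVec, Matrix.mulVec_smul, mul_assoc]

lemma kerVec_mem (e1 e2 : SplicingDatum) (v : Fin e1.a1 → F2) (w : Fin e2.a1 → F2)
    (hv : (e1.B1 * e1.B0) *ᵥ v = 0) (hw : e2.X1M *ᵥ w = 0) :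
    (spliceD e1 e2) *ᵥ (kerVec e1 e2 w v) = 0 := by
  have c1 : e1.A1 * e1.B1 = e1.B1 * e1.D1 := mat_eq_of_add e1.comm1
  have c2 : e2.A1 * e2.B1 = e2.B1 * e2.D1 := mat_eq_of_add e2.comm1
  have hv' : e1.B1 *ᵥ e1.B0 *ᵥ v = 0 := by rw [Matrix.mulVec_mulVec, hv]
  have hB : e1.B1 *ᵥ e1.D1 *ᵥ e1.B0 *ᵥ v = 0 := by
    rw [Matrix.mulVec_mulVec, ← c1, ← Matrix.mulVec_mulVec, hv', Matrix.mulVec_zero]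
  have hw' : e2.Binf *ᵥ e2.B1 *ᵥ e2.B0 *ᵥ w = 0 := by
    rw [← hw]; simp [X1M, Matrix.mulVec_mulVec, Matrix.mul_assoc]
  have hA : e2.A1 *ᵥ e2.B1 *ᵥ e2.B0 *ᵥ w = e2.B1 *ᵥ e2.D1 *ᵥ e2.B0 *ᵥ w := by
    rw [Matrix.mulVec_mulVec, c2, ← Matrix.mulVec_mulVec]
  simp only [spliceD, row1, row2, row3, row4, row5, row6, kerVec, LinearMap.coe_mk,
    AddHom.coe_mk, Matrix.fromRows_mulVec, Matrix.fromCols_mulVec_sumElim, kron_mulVec,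
    Matrix.mulVec_zero, Matrix.zero_mulVec, ← Matrix.mulVec_mulVec, hv', hB, hw', hA,
    tensVec_zero_left, tensVec_zero_right, add_zero, zero_add, Matrix.one_mulVec, vec_add_self]
  funext i
  rcases i with i | i | i | i | i | i <;> rfl

lemma kerVec_inj (e1 e2 : SplicingDatum) (w : Fin e2.a1 → F2)
    (hw : (e2.B1 * e2.B0) *ᵥ w ≠ 0) : Function.Injective (kerVec e1 e2 w) := by
  obtain ⟨j, hj⟩ := Function.ne_iff.mp hw
  intro x y h
  funext i
  have := congrFun h (Sum.inr (Sum.inr (Sum.inl (i, j))))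
  exact mul_right_cancel₀ hj this

lemma kdim_spliceD_ge (e1 e2 : SplicingDatum) (w : Fin e2.a1 → F2)
    (hw : (e2.B1 * e2.B0) *ᵥ w ≠ 0) (hw0 : e2.X1M *ᵥ w = 0) :
    kdim (e1.B1 * e1.B0) ≤ kdim (spliceD e1 e2) := by
  unfold kdim
  let f := ((kerVec e1 e2 w).domRestrict (LinearMap.ker (e1.B1 * e1.B0).mulVecLin)).codRestrict
    (LinearMap.ker (spliceD e1 e2).mulVecLin) (fun v => kerVec_mem e1 e2 v.1 w v.2 hw0)
  refine LinearMap.finrank_le_finrank_of_injective (f := f) ?_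
  intro x y h
  exact Subtype.ext (kerVec_inj e1 e2 w hw (congrArg Subtype.val h))

end SplicingDatum

open SplicingDatum in
/-- lower bounds for `ker D` and `coker D` when `B0²` is invertible
(in particular `ainf² = a1²`), `B1²` is injective, `Binf²` is surjective and
`a0² = a1² + 1`. -/
theorem stmt12 (e1 e2 : SplicingDatum)
    (hsq : e2.ainf = e2.a1)
    (hB0 : Function.Bijective e2.B0.mulVecLin)
    (hB1 : Function.Injective e2.B1.mulVecLin)
    (hBinf : Function.Surjective e2.Binf.mulVecLin)
    (ha0 : e2.a0 = e2.a1 + 1) :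
    kdim (spliceD e1 e2) ≥ kdim (e1.B1 * e1.B0) * kdim e2.X1M ∧
    cdim (spliceD e1 e2) ≥ cdim (e1.B1 * e1.B0) * cdim e2.XinfM := by
  have hinj : Function.Injective (e2.B1 * e2.B0).mulVecLin := by
    rw [Matrix.mulVecLin_mul]; exact hB1.comp hB0.1
  -- the kernel of `Binf` is one-dimensional
  have hk : kdim e2.Binf = 1 := by
    have h1 := e2.Binf.mulVecLin.finrank_range_add_finrank_ker
    rw [LinearMap.range_eq_top.mpr hBinf] at h1
    simp only [finrank_top, Module.finrank_fintype_fun_eq_card, Fintype.card_fin] at h1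
    unfold kdim
    omega
  have hX1 : kdim e2.X1M ≤ 1 := by
    rw [← hk]
    unfold kdim
    let f := ((e2.B1 * e2.B0).mulVecLin.domRestrict (LinearMap.ker e2.X1M.mulVecLin)).codRestrict
      (LinearMap.ker e2.Binf.mulVecLin) (fun v => by
        have h : e2.X1M *ᵥ v.1 = 0 := v.2
        change e2.Binf *ᵥ ((e2.B1 * e2.B0) *ᵥ v.1) = 0
        rw [Matrix.mulVec_mulVec, ← Matrix.mul_assoc]
        exact h)
    refine LinearMap.finrank_le_finrank_of_injective (f := f) ?_
    intro x y h
    exact Subtype.ext (hinj (congrArg Subtype.val h))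
  have hXeq : kdim e2.XinfM = kdim e2.X1M := by
    let e := LinearEquiv.ofBijective e2.B0.mulVecLin hB0
    have h1 : LinearMap.ker e2.XinfM.mulVecLin =
        (LinearMap.ker e2.X1M.mulVecLin).map (e : _ →ₗ[F2] _) := by
      ext x
      obtain ⟨u, rfl⟩ := e.surjective x
      have hu : e u = e2.B0 *ᵥ u := rfl
      rw [Submodule.mem_map_equiv, LinearEquiv.symm_apply_apply, LinearMap.mem_ker,
        LinearMap.mem_ker, hu]
      have h2 : e2.XinfM.mulVecLin (e2.B0 *ᵥ u) = e2.B0.mulVecLin (e2.X1M.mulVecLin u) := by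
        simp [XinfM, X1M, Matrix.mul_assoc]
      rw [h2]
      exact map_eq_zero_iff _ hB0.1
    unfold kdim
    rw [h1]
    exact LinearEquiv.finrank_map_eq e _
  have hXc : cdim e2.XinfM = kdim e2.X1M := by
    have := kdim_cdim e2.XinfM
    omega
  have hD := kdim_cdim (spliceD e1 e2)
  have hBB := kdim_cdim (e1.B1 * e1.B0)
  simp only [Tgt, Src, Fintype.card_sum, Fintype.card_prod, Fintype.card_fin, hsq, ha0] at hD hBB
  rw [hXc]
  rcases Nat.eq_zero_or_pos (kdim e2.X1M) with h0 | hpos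
  · simp [h0]
  · have h1 : kdim e2.X1M = 1 := by omega
    have hne : LinearMap.ker e2.X1M.mulVecLin ≠ ⊥ := by
      intro hb
      unfold kdim at h1
      rw [hb] at h1
      simp at h1
    obtain ⟨w, hw, hw0⟩ := Submodule.exists_mem_ne_zero_of_ne_bot hne
    have hw1 : (e2.B1 * e2.B0) *ᵥ w ≠ 0 := by
      intro h
      exact hw0 (hinj (by simpa using h))
    have hge := kdim_spliceD_ge e1 e2 w hw1 hw
    rw [h1, mul_one, mul_one]
    refine ⟨hge, ?_⟩
    nlinarith
end
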